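/- Let (X,d) be a proper geodesic metric space, φ : X → ℝ a Kantorovich potential, and γ a φ-Kantorovich geodesic with ℓ := ℓ(γ) > 0. Let z_c : (0,1) → ℝ be continuous, and assume that for Lebesgue-a.e. t ∈ (0,1), both maps τ ↦ φ_τ(γ_t) and τ ↦ φ̄_τ(γ_t) have a second Peano derivative at τ = t equal to z_c(t). Then: (i) for every t ∈ (0,1), both maps have a second Peano derivative at τ = t equal to z_c(t); (ii) for all 0 < s < t < 1, (z_c(t) − z_c(s))/(t − s) ≥ √((s/t)·((1−t)/(1−s)))·|z_c(s)|·|z_c(t)|/ℓ²; (iii) at any point t ∈ (0,1) where z_c is differentiable, z_c′(t) ≥ z_c(t)²/ℓ². -/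

import Mathlib

/-- `ψ` is pointwise the `c`-transform of `φ` for the cost `c = d²/2`:
at every point `x`, `ψ x` is a genuine (finite) infimum of `d(x,y)²/2 - φ(y)` over `y`. -/
def IsCTransform {X : Type*} [MetricSpace X] (φ ψ : X → ℝ) : Prop :=
  ∀ x : X, IsGLB {v : ℝ | ∃ y : X, v = dist x y ^ 2 / 2 - φ y} (ψ x)

/-- `φ` is a Kantorovich potential with (real-valued) conjugate potential `φc`. -/
def IsKantorovichPair {X : Type*} [MetricSpace X] (φ φc : X → ℝ) : Prop :=
  IsCTransform φ φc ∧ IsCTransform φc φ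

/-- A constant-speed geodesic parametrized on `[0,1]`. -/
def IsGeodesic {X : Type*} [MetricSpace X] (γ : ℝ → X) : Prop :=
  ∀ s ∈ Set.Icc (0:ℝ) 1, ∀ t ∈ Set.Icc (0:ℝ) 1,
    dist (γ s) (γ t) = |s - t| * dist (γ 0) (γ 1)

/-- A `φ`-Kantorovich geodesic: a geodesic with `φ(γ₀) + φ^c(γ₁) = ℓ(γ)²/2`,
where `ℓ(γ) = d(γ₀,γ₁)`. -/
def IsKantorovichGeodesic {X : Type*} [MetricSpace X] (φ φc : X → ℝ) (γ : ℝ → X) : Prop :=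
  IsGeodesic γ ∧ φ (γ 0) + φc (γ 1) = dist (γ 0) (γ 1) ^ 2 / 2

/-- A metric space is geodesic if every pair of points is joined by a geodesic. -/
def IsGeodesicSpace (X : Type*) [MetricSpace X] : Prop :=
  ∀ x y : X, ∃ γ : ℝ → X, IsGeodesic γ ∧ γ 0 = x ∧ γ 1 = y

/-- The interpolating intermediate-time Kantorovich potential
`φ_t(x) = -inf_y (d(x,y)²/(2t) - φ(y))` for `t ≠ 0`, and `φ_0 = φ`. -/
noncomputable def interpPotential {X : Type*} [MetricSpace X] (φ : X → ℝ) (t : ℝ) (x : X) : ℝ :=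
  if t = 0 then φ x
  else -sInf {v : ℝ | ∃ y : X, v = dist x y ^ 2 / (2 * t) - φ y}

/-- The time-reversed interpolating Kantorovich potential
`φ̄_t(x) = inf_y (d(x,y)²/(2(1-t)) - φ^c(y))` for `t ≠ 1`, and `φ̄_1 = -φ^c`. -/
noncomputable def reversePotential {X : Type*} [MetricSpace X] (φc : X → ℝ) (t : ℝ) (x : X) : ℝ :=
  if t = 1 then -φc x
  else sInf {v : ℝ | ∃ y : X, v = dist x y ^ 2 / (2 * (1 - t)) - φc y}

/-- `g` has a second Peano derivative `q` at `τ₀`: it is differentiable at `τ₀` (with some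
derivative `d`) and `g(τ₀+ε) = g(τ₀) + d·ε + q·ε²/2 + o(ε²)` as `ε → 0`. -/
def HasSecondPeanoDerivAt (g : ℝ → ℝ) (q : ℝ) (τ₀ : ℝ) : Prop :=
  ∃ d : ℝ, HasDerivAt g d τ₀ ∧
    Asymptotics.IsLittleO (nhds (0 : ℝ))
      (fun ε : ℝ => g (τ₀ + ε) - g τ₀ - d * ε - q * ε ^ 2 / 2)
      (fun ε : ℝ => ε ^ 2)

open Set Filter Topology MeasureTheory

/-- Abstract form of the Hopf-Lax evolution along a geodesic: `g t τ` stands for the potential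
at time `τ` evaluated at `γ_t`, and `K = ℓ²/2`. -/
def EvolFam (g : ℝ → ℝ → ℝ) (K C : ℝ) : Prop :=
  (∀ t ∈ Ioo (0:ℝ) 1, g t t = C - K * t) ∧
  ∀ s t a b : ℝ, 0 < s → s < t → t < 1 → 0 < a → a < b → b < 1 →
    g s a ≤ g t b + K * (t - s) ^ 2 / (b - a)

theorem EvolFam.deriv_eq {g : ℝ → ℝ → ℝ} {K C : ℝ} (h : EvolFam g K C) {t d : ℝ}
    (ht : t ∈ Ioo (0:ℝ) 1) (hd : HasDerivAt (g t) d t) : d = K := by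
  obtain ⟨h0, h1⟩ := ht
  obtain ⟨s, hs0, hst⟩ : ∃ s, 0 < s ∧ s < t := exists_between h0
  have hts : t - s ≠ 0 := by linarith
  have hw : HasDerivAt (fun b => C - K * s - K * (t - s) ^ 2 * (b - s)⁻¹) K t := by
    have h2 : HasDerivAt (fun b : ℝ => b - s) 1 t := (hasDerivAt_id t).sub_const _
    have h3 := ((h2.inv hts).const_mul (K * (t - s)^2)).const_sub (C - K * s)
    refine h3.congr_deriv ?_
    field_simp
  have hsub := hd.sub hw
  have hmin : IsLocalMin (g t - fun b => C - K * s - K * (t - s) ^ 2 * (b - s)⁻¹) t := by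
    have hn : Ioo s 1 ∈ 𝓝 t := Ioo_mem_nhds (by linarith) h1
    filter_upwards [hn] with b hb
    have := h.2 s t s b (by linarith) (by linarith) h1 (by linarith) hb.1 hb.2
    rw [h.1 s ⟨by linarith, by linarith⟩] at this
    have e := h.1 t ⟨h0, h1⟩
    simp only [Pi.sub_apply]
    rw [e]
    have e2 : K * (t - s)^2 * (t - s)⁻¹ = K * (t - s) := by field_simp
    rw [e2]
    rw [div_eq_mul_inv] at this
    linarith
  have := hmin.hasDerivAt_eq_zero hsub
  linarith

theorem EvolFam.peano {g : ℝ → ℝ → ℝ} {K C : ℝ} (h : EvolFam g K C) {t q : ℝ}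
    (ht : t ∈ Ioo (0:ℝ) 1) (hp : HasSecondPeanoDerivAt (g t) q t) {c : ℝ} (hc : 0 < c) :
    ∀ᶠ ε in 𝓝 (0:ℝ), |g t (t + ε) - (C - K * t) - K * ε - q * ε ^ 2 / 2| ≤ c * ε ^ 2 := by
  obtain ⟨d, hd, ho⟩ := hp
  rw [h.deriv_eq ht hd, h.1 t ht] at ho
  filter_upwards [ho.bound hc] with ε hε
  simpa using hε

theorem peano_of_bound {f : ℝ → ℝ} {K q t : ℝ}
    (hb : ∀ c > 0, ∀ᶠ ε in 𝓝 (0:ℝ), |f (t + ε) - f t - K * ε - q * ε ^ 2 / 2| ≤ c * ε ^ 2) :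
    HasSecondPeanoDerivAt f q t := by
  have ho : Asymptotics.IsLittleO (nhds (0 : ℝ))
      (fun ε : ℝ => f (t + ε) - f t - K * ε - q * ε ^ 2 / 2) (fun ε : ℝ => ε ^ 2) := by
    rw [Asymptotics.isLittleO_iff]
    intro c hc
    filter_upwards [hb c hc] with ε hε
    simpa using hε
  refine ⟨K, ?_, ho⟩
  rw [hasDerivAt_iff_isLittleO_nhds_zero]
  have h2 : Asymptotics.IsLittleO (nhds (0:ℝ)) (fun ε : ℝ => ε ^ 2) (fun ε : ℝ => ε) := by
    simpa using (Asymptotics.isLittleO_pow_pow (𝕜 := ℝ) (m := 1) (n := 2) (by norm_num))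
  have h3 := (ho.trans h2).add (h2.const_mul_left (q/2))
  refine h3.congr_left ?_
  intro ε
  simp only [smul_eq_mul]
  ring

theorem exists_good {P : ℝ → Prop}
    (hae : ∀ᵐ t ∂((volume : Measure ℝ).restrict (Ioo (0:ℝ) 1)), P t)
    {a b : ℝ} (ha : 0 ≤ a) (hab : a < b) (hb : b ≤ 1) : ∃ t, a < t ∧ t < b ∧ P t := by
  rw [ae_restrict_iff' measurableSet_Ioo] at hae
  by_contra hcon
  push Not at hcon
  have : volume (Ioo a b) = 0 := by
    refine measure_mono_null ?_ (ae_iff.1 hae)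
    intro x hx hP
    exact hcon x hx.1 hx.2 (hP ⟨by linarith [hx.1], by linarith [hx.2]⟩)
  rw [Real.volume_Ioo, ENNReal.ofReal_eq_zero] at this
  linarith

theorem EvolFam.all {g : ℝ → ℝ → ℝ} {K C : ℝ} (h : EvolFam g K C) {z : ℝ → ℝ}
    (hz : ContinuousOn z (Ioo 0 1))
    (hae : ∀ᵐ t ∂((volume : Measure ℝ).restrict (Ioo (0:ℝ) 1)),
      HasSecondPeanoDerivAt (g t) (z t) t) (t : ℝ) (ht : t ∈ Ioo (0:ℝ) 1) :
    HasSecondPeanoDerivAt (g t) (z t) t := by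
  apply peano_of_bound (K := K)
  intro c hc
  have hcont : ContinuousAt z t := hz.continuousAt (Ioo_mem_nhds ht.1 ht.2)
  obtain ⟨η, hη, hzη⟩ := Metric.continuousAt_iff.1 hcont c hc
  obtain ⟨h0, h1⟩ := ht
  obtain ⟨s, hs1, hs2, hs⟩ := exists_good hae (a := max 0 (t - η)) (b := t) (le_max_left _ _)
    (max_lt h0 (by linarith)) h1.le
  obtain ⟨r, hr1, hr2, hr⟩ := exists_good hae (a := t) (b := min 1 (t + η)) h0.le
    (lt_min h1 (by linarith)) (min_le_left _ _)
  obtain ⟨hs0, hsη⟩ := max_lt_iff.1 hs1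
  obtain ⟨hr0, hrη⟩ := lt_min_iff.1 hr2
  have hzs := hzη (x := s) (by rw [Real.dist_eq, abs_lt]; constructor <;> linarith)
  have hzr := hzη (x := r) (by rw [Real.dist_eq, abs_lt]; constructor <;> linarith)
  rw [Real.dist_eq, abs_lt] at hzs hzr
  have es := h.peano ⟨hs0, by linarith⟩ hs (half_pos hc)
  have er := h.peano ⟨by linarith, hr0⟩ hr (half_pos hc)
  have hn : Ioo (-s) (1 - r) ∈ 𝓝 (0:ℝ) := Ioo_mem_nhds (by linarith) (by linarith)
  filter_upwards [es, er, hn] with ε e1 e2 e3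
  have i1 := h.2 s t (s + ε) (t + ε) hs0 hs2 h1 (by linarith [e3.1]) (by linarith)
    (by linarith [e3.2])
  have i2 := h.2 t r (t + ε) (r + ε) h0 hr1 hr0 (by linarith [e3.1]) (by linarith)
    (by linarith [e3.2])
  have q1 : K * (t - s)^2 / (t + ε - (s + ε)) = K * (t - s) := by
    have : t - s ≠ 0 := by linarith
    rw [show t + ε - (s + ε) = t - s by ring]; field_simp
  have q2 : K * (r - t)^2 / (r + ε - (t + ε)) = K * (r - t) := by
    have : r - t ≠ 0 := by linarith
    rw [show r + ε - (t + ε) = r - t by ring]; field_simp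
  rw [q1] at i1
  rw [q2] at i2
  rw [h.1 t ⟨h0, h1⟩]
  rw [abs_le] at e1 e2 ⊢
  have hε := sq_nonneg ε
  constructor
  · nlinarith [mul_nonneg hε (by linarith : 0 ≤ z s - z t + c)]
  · nlinarith [mul_nonneg hε (by linarith : 0 ≤ z t - z r + c)]

theorem EvolFam.quad {g : ℝ → ℝ → ℝ} {K C : ℝ} (h : EvolFam g K C) {z : ℝ → ℝ}
    (hall : ∀ t ∈ Ioo (0:ℝ) 1, HasSecondPeanoDerivAt (g t) (z t) t) {s t : ℝ}
    (hs : 0 < s) (hst : s < t) (ht : t < 1) (u v : ℝ) :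
    0 ≤ z t * u ^ 2 - z s * v ^ 2 + 2 * K / (t - s) * (u - v) ^ 2 := by
  have hT : 0 < t - s := by linarith
  -- limit function in x
  have key : ∀ c > 0, 0 ≤ z t * u ^ 2 - z s * v ^ 2 + 2 * K / (t - s) * (u - v) ^ 2
      + 2 * c * (u ^ 2 + v ^ 2) := by
    intro c hc
    have et := h.peano ⟨by linarith, ht⟩ (hall t ⟨by linarith, ht⟩) hc
    have es := h.peano ⟨hs, by linarith⟩ (hall s ⟨hs, by linarith⟩) hc
    have tu : Tendsto (fun x : ℝ => u * x) (𝓝 0) (𝓝 0) := by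
      have : Continuous fun x : ℝ => u * x := by fun_prop
      simpa using this.tendsto 0
    have tv : Tendsto (fun x : ℝ => v * x) (𝓝 0) (𝓝 0) := by
      have : Continuous fun x : ℝ => v * x := by fun_prop
      simpa using this.tendsto 0
    have n1 : ∀ᶠ x in 𝓝 (0:ℝ), 0 < s + v * x :=
      (show ContinuousAt (fun x : ℝ => s + v * x) 0 by fun_prop).eventually_const_lt (by simpa)
    have n2 : ∀ᶠ x in 𝓝 (0:ℝ), t + u * x < 1 :=
      (show ContinuousAt (fun x : ℝ => t + u * x) 0 by fun_prop).eventually_lt_const (by simpa)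
    have n3 : ∀ᶠ x in 𝓝 (0:ℝ), 0 < t - s + (u - v) * x :=
      (show ContinuousAt (fun x : ℝ => t - s + (u - v) * x) 0 by fun_prop).eventually_const_lt
        (by simpa)
    have ev : ∀ᶠ x in 𝓝[≠] (0:ℝ), 0 ≤ z t * u ^ 2 - z s * v ^ 2
        + 2 * K / (t - s + (u - v) * x) * (u - v) ^ 2 + 2 * c * (u ^ 2 + v ^ 2) := by
      filter_upwards [(tu.eventually et).filter_mono nhdsWithin_le_nhds,
        (tv.eventually es).filter_mono nhdsWithin_le_nhds, n1.filter_mono nhdsWithin_le_nhds,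
        n2.filter_mono nhdsWithin_le_nhds, n3.filter_mono nhdsWithin_le_nhds,
        self_mem_nhdsWithin] with x e1 e2 m1 m2 m3 hx
      have hx0 : x ≠ 0 := hx
      have i := h.2 s t (s + v * x) (t + u * x) hs hst ht m1 (by linarith) m2
      rw [show t + u * x - (s + v * x) = t - s + (u - v) * x by ring] at i
      have e : K * (t - s) ^ 2 / (t - s + (u - v) * x)
          = K * (t - s) - K * ((u - v) * x)
            + (K / (t - s + (u - v) * x) * (u - v) ^ 2) * x ^ 2 := by
        field_simp
        ring
      rw [e] at i
      rw [abs_le] at e1 e2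
      have hx2 : 0 < x ^ 2 := by positivity
      have e3 : 2 * K / (t - s + (u - v) * x) = 2 * (K / (t - s + (u - v) * x)) := by ring
      rw [e3]
      generalize K / (t - s + (u - v) * x) = A at i ⊢
      refine nonneg_of_mul_nonneg_left (b := x ^ 2) ?_ hx2
      nlinarith [e1.1, e1.2, e2.1, e2.2, i]
    have lim : Tendsto (fun x : ℝ => z t * u ^ 2 - z s * v ^ 2
        + 2 * K / (t - s + (u - v) * x) * (u - v) ^ 2 + 2 * c * (u ^ 2 + v ^ 2)) (𝓝[≠] 0)
        (𝓝 (z t * u ^ 2 - z s * v ^ 2 + 2 * K / (t - s) * (u - v) ^ 2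
          + 2 * c * (u ^ 2 + v ^ 2))) := by
      have hc0 : ContinuousAt (fun x : ℝ => z t * u ^ 2 - z s * v ^ 2
        + 2 * K / (t - s + (u - v) * x) * (u - v) ^ 2 + 2 * c * (u ^ 2 + v ^ 2)) 0 := by
        have : t - s + (u - v) * 0 ≠ 0 := by simpa using hT.ne'
        fun_prop (disch := assumption)
      have := hc0.tendsto.mono_left (nhdsWithin_le_nhds (s := {0}ᶜ))
      simpa using this
    exact ge_of_tendsto lim ev
  by_contra hneg
  push Not at hneg
  set A := z t * u ^ 2 - z s * v ^ 2 + 2 * K / (t - s) * (u - v) ^ 2 with hA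
  have hB : 0 < 2 * (u ^ 2 + v ^ 2) + 1 := by positivity
  have := key (-A / (2 * (u ^ 2 + v ^ 2) + 1)) (div_pos (by linarith) hB)
  have e : 2 * (-A / (2 * (u ^ 2 + v ^ 2) + 1)) * (u ^ 2 + v ^ 2)
     = -A - (-A / (2 * (u ^ 2 + v ^ 2) + 1)) := by field_simp; ring
  rw [e] at this
  have := div_pos (show 0 < -A by linarith) hB
  linarith

/-- The algebraic consequence of the family of quadratic inequalities. -/
theorem third_order {L : ℝ} (hL : 0 < L) {z : ℝ → ℝ}
    (hq : ∀ s t : ℝ, 0 < s → s < t → t < 1 → ∀ u v : ℝ,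
      0 ≤ z t * u ^ 2 - z s * v ^ 2 + L / (t - s) * (u - v) ^ 2)
    {s t : ℝ} (hs : 0 < s) (hst : s < t) (ht : t < 1) :
    (z t - z s) / (t - s)
      ≥ Real.sqrt (s / t * ((1 - t) / (1 - s))) * (|z s| * |z t|) / L := by
  have hT : 0 < t - s := by linarith
  have h1t : 0 < 1 - t := by linarith
  have h1s : 0 < 1 - s := by linarith
  have h0t : 0 < t := by linarith
  have hmono : z s ≤ z t := by
    have := hq s t hs hst ht 1 1
    linarith
  set c := Real.sqrt (s / t * ((1 - t) / (1 - s))) with hc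
  have hc0 : 0 ≤ c := Real.sqrt_nonneg _
  have hc1 : c ≤ 1 := by
    rw [hc]
    apply Real.sqrt_le_one.2
    have : s / t ≤ 1 := (div_le_one h0t).2 hst.le
    have h2 : (1 - t) / (1 - s) ≤ 1 := (div_le_one h1s).2 (by linarith)
    exact mul_le_one₀ this (by positivity) h2
  rw [ge_iff_le, div_le_div_iff₀ hL hT]
  -- same sign bound
  have hdisc : z s * z t * (t - s) ≤ L * (z t - z s) := by
    have ha : 0 < L / (t - s) := by positivity
    set a := L / (t - s) with hadef
    have hLa : L = a * (t - s) := by rw [hadef]; field_simp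
    have hd : 0 ≤ a * (z t - z s) - z t * z s := by
      have b1 := hq s t hs hst ht 1 0
      have b2 := hq s t hs hst ht 0 1
      have b3 := hq s t hs hst ht a (z t + a)
      have b4 := hq s t hs hst ht (a - z s) a
      rw [← hadef] at b1 b2 b3 b4
      rcases lt_or_ge 0 (z t + a) with hp | hp
      · refine nonneg_of_mul_nonneg_left (b := z t + a) ?_ hp
        nlinarith
      · have : z t + a = 0 := by linarith
        rcases lt_or_ge 0 (a - z s) with hp' | hp'
        · refine nonneg_of_mul_nonneg_left (b := a - z s) ?_ hp'
          nlinarith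
        · linarith
    rw [hLa]
    nlinarith
  rcases le_total 0 (z s * z t) with hsg | hsg
  · rw [← abs_mul, abs_of_nonneg hsg]
    have : c * (z s * z t) * (t - s) ≤ 1 * (z s * z t) * (t - s) := by gcongr
    linarith
  · have hzs : z s ≤ 0 := by
      by_contra hcon
      push Not at hcon
      nlinarith
    have hzt : 0 ≤ z t := by
      by_contra hcon
      push Not at hcon
      nlinarith
    rw [abs_of_nonpos hzs, abs_of_nonneg hzt]
    have bs : 0 ≤ z s * s + L := by
      by_contra hcon
      push Not at hcon
      have lim : Tendsto (fun r : ℝ => z s * (s - r) + L) (𝓝[>] 0) (𝓝 (z s * s + L)) := by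
        have : Continuous (fun r : ℝ => z s * (s - r) + L) := by fun_prop
        simpa using (this.tendsto 0).mono_left (nhdsWithin_le_nhds (s := Ioi 0))
      refine absurd (ge_of_tendsto lim ?_) (not_le.2 hcon)
      filter_upwards [Ioo_mem_nhdsGT hs] with r hr
      have := hq r s hr.1 hr.2 (by linarith) 1 0
      have hrs : 0 < s - r := by linarith [hr.2]
      have e : z s * (s - r) + L
        = (z s * 1 ^ 2 - z r * 0 ^ 2 + L / (s - r) * (1 - 0) ^ 2) * (s - r) := by
        field_simp; ring
      rw [e]
      positivity
    have bt : 0 ≤ L - z t * (1 - t) := by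
      by_contra hcon
      push Not at hcon
      have lim : Tendsto (fun r : ℝ => L - z t * (r - t)) (𝓝[<] 1) (𝓝 (L - z t * (1 - t))) := by
        have : Continuous (fun r : ℝ => L - z t * (r - t)) := by fun_prop
        simpa using (this.tendsto 1).mono_left (nhdsWithin_le_nhds (s := Iio 1))
      refine absurd (ge_of_tendsto lim ?_) (not_le.2 hcon)
      filter_upwards [Ioo_mem_nhdsLT ht] with r hr
      have := hq t r h0t hr.1 hr.2 0 1
      have hrs : 0 < r - t := by linarith [hr.1]
      have e : L - z t * (r - t)
        = (z r * 0 ^ 2 - z t * 1 ^ 2 + L / (r - t) * (0 - 1) ^ 2) * (r - t) := by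
        field_simp; ring
      rw [e]
      positivity
    have hcT : c * (t - s) ≤ s + (1 - t) := by
      apply le_of_sq_le_sq _ (by linarith)
      rw [mul_pow, hc, Real.sq_sqrt (by positivity)]
      have e : s / t * ((1 - t) / (1 - s)) * (t - s) ^ 2
        = s * (1 - t) * ((t - s) ^ 2 / (t * (1 - s))) := by field_simp
      have e2 : (t - s) ^ 2 / (t * (1 - s)) ≤ 1 := by
        rw [div_le_one (by positivity)]
        nlinarith
      rw [e]
      have : s * (1 - t) * ((t - s) ^ 2 / (t * (1 - s))) ≤ s * (1 - t) * 1 := by gcongr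
      nlinarith [mul_pos hs h1t]
    have hpq : 0 ≤ -z s * z t := by linarith
    have f1 := mul_le_mul_of_nonneg_left hcT hpq
    have f2 := mul_nonneg hzt bs
    have f3 := mul_nonneg (neg_nonneg.2 hzs) bt
    nlinarith

theorem third_order_deriv {L : ℝ} {z : ℝ → ℝ}
    (h3 : ∀ s t : ℝ, 0 < s → s < t → t < 1 → (z t - z s) / (t - s)
      ≥ Real.sqrt (s / t * ((1 - t) / (1 - s))) * (|z s| * |z t|) / L)
    {t d : ℝ} (ht : t ∈ Ioo (0:ℝ) 1) (hd : HasDerivAt z d t) : d ≥ z t ^ 2 / L := by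
  obtain ⟨h0, h1⟩ := ht
  have hsl : Tendsto (fun r => (z r - z t) / (r - t)) (𝓝[>] t) (𝓝 d) := by
    have := (hasDerivAt_iff_tendsto_slope.1 hd).mono_left
      (nhdsWithin_mono t (show Ioi t ⊆ {t}ᶜ from fun x hx => ne_of_gt hx))
    refine this.congr ?_
    intro r
    rw [slope_def_field]
  have hc : ContinuousAt (fun r => Real.sqrt (t / r * ((1 - r) / (1 - t))) * (|z t| * |z r|) / L)
      t := by
    have := hd.continuousAt
    have h0' : t ≠ 0 := h0.ne'
    have h1' : 1 - t ≠ 0 := by linarith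
    fun_prop (disch := assumption)
  have hlim := hc.tendsto.mono_left (nhdsWithin_le_nhds (s := Ioi t))
  have e : Real.sqrt (t / t * ((1 - t) / (1 - t))) * (|z t| * |z t|) / L = z t ^ 2 / L := by
    rw [div_self h0.ne', div_self (by linarith), abs_mul_abs_self]
    simp [sq]
  rw [e] at hlim
  refine le_of_tendsto_of_tendsto hlim hsl ?_
  filter_upwards [Ioo_mem_nhdsGT h1] with r hr
  exact h3 t r h0 hr.1 hr.2

/-- The two-leg inequality for the quadratic cost. -/
theorem two_leg {x y w a b : ℝ} (hx : 0 ≤ x) (h : x ≤ y + w) (ha : 0 < a) (hb : 0 < b) :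
    x ^ 2 / (2 * (a + b)) ≤ y ^ 2 / (2 * a) + w ^ 2 / (2 * b) := by
  have h1 : x ^ 2 / (2 * (a + b)) ≤ (y + w) ^ 2 / (2 * (a + b)) := by gcongr
  have h2 : y ^ 2 / (2 * a) + w ^ 2 / (2 * b) - (y + w) ^ 2 / (2 * (a + b))
      = (b * y - a * w) ^ 2 / (2 * a * b * (a + b)) := by
    field_simp
    ring
  have h3 : 0 ≤ (b * y - a * w) ^ 2 / (2 * a * b * (a + b)) := by positivity
  linarith

section
variable {X : Type*} [MetricSpace X]

theorem interp_ge {φ φc : X → ℝ} (hp : IsCTransform φ φc) {t : ℝ} (h0 : 0 < t) (h1 : t < 1)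
    (x y : X) : φ y - dist x y ^ 2 / (2 * t) ≤ interpPotential φ t x := by
  unfold interpPotential
  rw [if_neg h0.ne']
  have : sInf {v : ℝ | ∃ y : X, v = dist x y ^ 2 / (2 * t) - φ y}
      ≤ dist x y ^ 2 / (2 * t) - φ y := by
    refine csInf_le ?_ ⟨y, rfl⟩
    refine ⟨φc x, ?_⟩
    rintro v ⟨w, rfl⟩
    have h2 := (hp x).1 ⟨w, rfl⟩
    have : dist x w ^ 2 / 2 ≤ dist x w ^ 2 / (2 * t) := by
      apply div_le_div_of_nonneg_left (by positivity) (by positivity) (by linarith)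
    linarith
  linarith

theorem interp_le {φ : X → ℝ} {t : ℝ} (h0 : 0 < t) (x : X) {M : ℝ}
    (h : ∀ y, φ y - dist x y ^ 2 / (2 * t) ≤ M) : interpPotential φ t x ≤ M := by
  unfold interpPotential
  rw [if_neg h0.ne']
  have : -M ≤ sInf {v : ℝ | ∃ y : X, v = dist x y ^ 2 / (2 * t) - φ y} := by
    refine le_csInf ⟨dist x x ^ 2 / (2 * t) - φ x, x, rfl⟩ ?_
    rintro v ⟨w, rfl⟩
    linarith [h w]
  linarith

theorem interp_evol {φ φc : X → ℝ} (hpair : IsKantorovichPair φ φc) {γ : ℝ → X}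
    (hγ : IsKantorovichGeodesic φ φc γ) :
    EvolFam (fun t τ => interpPotential φ τ (γ t)) (dist (γ 0) (γ 1) ^ 2 / 2) (φ (γ 0)) := by
  obtain ⟨hg, hφ⟩ := hγ
  constructor
  · rintro t ⟨h0, h1⟩
    apply le_antisymm
    · apply interp_le h0
      intro y
      have a1 := (hpair.1 (γ 1)).1 ⟨y, rfl⟩
      have a2 := two_leg (a := t) (b := 1 - t) (dist_nonneg (x := γ 1) (y := y))
        (show dist (γ 1) y ≤ dist (γ t) y + dist (γ t) (γ 1) by
          linarith [dist_triangle (γ 1) (γ t) y, dist_comm (γ 1) (γ t)]) h0 (by linarith)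
      rw [hg t ⟨h0.le, h1.le⟩ 1 (by simp), abs_of_neg (by linarith : t - 1 < 0)] at a2
      have e : (-(t - 1) * dist (γ 0) (γ 1)) ^ 2 / (2 * (1 - t))
        = (1 - t) * dist (γ 0) (γ 1) ^ 2 / 2 := by
        have : 1 - t ≠ 0 := by linarith
        field_simp
        ring
      rw [e, show 2 * (t + (1 - t)) = (2:ℝ) by ring] at a2
      linarith
    · have := interp_ge hpair.1 h0 h1 (γ t) (γ 0)
      rw [hg t ⟨h0.le, h1.le⟩ 0 (by simp), sub_zero, abs_of_pos h0] at this
      have e : (t * dist (γ 0) (γ 1)) ^ 2 / (2 * t) = dist (γ 0) (γ 1) ^ 2 / 2 * t := by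
        field_simp
      rw [e] at this
      exact this
  · intro s t a b hs hst ht ha hab hb
    apply interp_le ha
    intro y
    have a1 := interp_ge hpair.1 (ha.trans hab) hb (γ t) y
    have a2 := two_leg (a := a) (b := b - a) (dist_nonneg (x := γ t) (y := y))
        (show dist (γ t) y ≤ dist (γ s) y + dist (γ t) (γ s) by
          linarith [dist_triangle (γ t) (γ s) y]) ha (by linarith)
    rw [hg t ⟨by linarith, ht.le⟩ s ⟨by linarith, by linarith⟩,
      abs_of_pos (by linarith : 0 < t - s)] at a2
    have e : ((t - s) * dist (γ 0) (γ 1)) ^ 2 / (2 * (b - a))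
        = dist (γ 0) (γ 1) ^ 2 / 2 * (t - s) ^ 2 / (b - a) := by
      have : b - a ≠ 0 := by linarith
      field_simp
    rw [e, show a + (b - a) = b by ring] at a2
    linarith

theorem reverse_evol {φ φc : X → ℝ} (hpair : IsKantorovichPair φ φc) {γ : ℝ → X}
    (hγ : IsKantorovichGeodesic φ φc γ) :
    EvolFam (fun t τ => reversePotential φc τ (γ t)) (dist (γ 0) (γ 1) ^ 2 / 2) (φ (γ 0)) := by
  have hγ' : IsKantorovichGeodesic φc φ (fun t => γ (1 - t)) := by
    refine ⟨?_, ?_⟩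
    · intro s hs t ht
      have := hγ.1 (1 - s) ⟨by linarith [hs.2], by linarith [hs.1]⟩ (1 - t)
        ⟨by linarith [ht.2], by linarith [ht.1]⟩
      simp only [sub_zero, sub_self]
      rw [this, dist_comm (γ 1) (γ 0), abs_sub_comm]
      congr 2
      ring
    · simp only [sub_zero, sub_self]
      rw [dist_comm (γ 1) (γ 0), ← hγ.2]
      ring
  have hev := interp_evol ⟨hpair.2, hpair.1⟩ hγ'
  simp only [sub_zero, sub_self] at hev
  rw [dist_comm (γ 1) (γ 0)] at hev
  have hrel : ∀ (τ : ℝ) (x : X), τ ≠ 1 →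
      reversePotential φc τ x = -interpPotential φc (1 - τ) x := by
    intro τ x h
    unfold reversePotential interpPotential
    rw [if_neg h, if_neg (sub_ne_zero.2 h.symm), neg_neg]
  constructor
  · rintro t ⟨h0, h1⟩
    have := hev.1 (1 - t) ⟨by linarith, by linarith⟩
    simp only [sub_sub_cancel] at this
    simp only [hrel t _ h1.ne, this]
    linarith [hγ.2]
  · intro s t a b hs hst ht ha hab hb
    have := hev.2 (1 - t) (1 - s) (1 - b) (1 - a) (by linarith) (by linarith) (by linarith)
      (by linarith) (by linarith) (by linarith)
    simp only [sub_sub_cancel] at this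
    simp only [hrel a _ (by linarith), hrel b _ (by linarith)]
    rw [show 1 - s - (1 - t) = t - s by ring, show 1 - a - (1 - b) = b - a by ring] at this
    linarith

end

/-- Third-order information on intermediate-time Kantorovich potentials. If `z_c` is
continuous on `(0,1)` and for a.e. `t ∈ (0,1)` both `τ ↦ φ_τ(γ_t)` and `τ ↦ φ̄_τ(γ_t)`
have second Peano derivative `z_c(t)` at `τ = t`, then: (i) this holds for every
`t ∈ (0,1)`; (ii) `(z_c(t)-z_c(s))/(t-s) ≥ √((s/t)·((1-t)/(1-s)))·|z_c(s)|·|z_c(t)|/ℓ²`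
for `0 < s < t < 1`; (iii) `z_c'(t) ≥ z_c(t)²/ℓ²` wherever `z_c` is differentiable. -/
theorem statement11 {X : Type*} [MetricSpace X] [ProperSpace X]
    (hgeo : IsGeodesicSpace X) (φ φc : X → ℝ) (hpair : IsKantorovichPair φ φc)
    (γ : ℝ → X) (hγ : IsKantorovichGeodesic φ φc γ)
    (hl : 0 < dist (γ 0) (γ 1))
    (zc : ℝ → ℝ) (hzc : ContinuousOn zc (Set.Ioo (0:ℝ) 1))
    (hae : ∀ᵐ t ∂((MeasureTheory.volume : MeasureTheory.Measure ℝ).restrict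
        (Set.Ioo (0:ℝ) 1)),
      HasSecondPeanoDerivAt (fun τ => interpPotential φ τ (γ t)) (zc t) t ∧
      HasSecondPeanoDerivAt (fun τ => reversePotential φc τ (γ t)) (zc t) t) :
    (∀ t ∈ Set.Ioo (0:ℝ) 1,
        HasSecondPeanoDerivAt (fun τ => interpPotential φ τ (γ t)) (zc t) t ∧
        HasSecondPeanoDerivAt (fun τ => reversePotential φc τ (γ t)) (zc t) t) ∧
      (∀ s t : ℝ, 0 < s → s < t → t < 1 →
        (zc t - zc s) / (t - s)
          ≥ Real.sqrt (s / t * ((1 - t) / (1 - s))) * (|zc s| * |zc t|)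
              / dist (γ 0) (γ 1) ^ 2) ∧
      (∀ t ∈ Set.Ioo (0:ℝ) 1, ∀ d : ℝ, HasDerivAt zc d t →
        d ≥ zc t ^ 2 / dist (γ 0) (γ 1) ^ 2) := by
  have h1 := interp_evol hpair hγ
  have h2 := reverse_evol hpair hγ
  have a1 := h1.all hzc (hae.mono fun t h => h.1)
  have a2 := h2.all hzc (hae.mono fun t h => h.2)
  have h3 : ∀ s t : ℝ, 0 < s → s < t → t < 1 →
        (zc t - zc s) / (t - s)
          ≥ Real.sqrt (s / t * ((1 - t) / (1 - s))) * (|zc s| * |zc t|)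
              / dist (γ 0) (γ 1) ^ 2 := by
    intro s t hs hst ht
    refine third_order (by positivity) ?_ hs hst ht
    intro s t hs hst ht u v
    have := h1.quad a1 hs hst ht u v
    rwa [mul_div_cancel₀ _ (two_ne_zero' ℝ)] at this
  exact ⟨fun t ht => ⟨a1 t ht, a2 t ht⟩, h3, fun t ht d hd => third_order_deriv h3 ht hd⟩
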